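/- Let f be an orientation-preserving homeomorphism of the plane and K a nonempty compact set with f(K) = K. Then f has a fixed point. -/

import Mathlib

/-- A homeomorphism of the plane is orientation preserving if it is isotopic
to the identity through homeomorphisms. -/
def OrientationPreserving (f : ℂ ≃ₜ ℂ) : Prop :=
  ∃ H : ℝ × ℂ → ℂ, Continuous H ∧ (∀ t : ℝ, IsHomeomorph fun z => H (t, z)) ∧
    (∀ z, H (0, z) = z) ∧ (∀ z, H (1, z) = f z)

/-!
Suppose that an orientation-preserving homeomorphism `f` without fixed points has a periodic point
`b`. A largest free disc about `b` has a point `y` and its image `f y` on the boundary; translating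
the broken segment from `y` through `b` to `f y` by the powers of `f` gives an equivariant curve
`Γ`, `Γ (u + 1) = f (Γ u)`, which comes back to itself. Take a return `Γ (s + T) = Γ s` of least lag
`T`; then `T > 1`, and the chords `Γ w - Γ u` with `u < w < u + T` have a continuous angle. As `w`
runs from `s` to `s + T`, the angle from the chord `(s, w)` to the opposite chord `(w, s + T)` is a
constant odd multiple `δ` of `π`, also along the isotopy to `f`. Computing it at `w = s + 1` before,
and at `w = s + T - 1` after the isotopy, where all chords have moved by `1` and the chord from
`s + T` has the same angle as the one from `s`, gives `δ = -δ`, which is absurd. Hence periodic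
points force fixed points.

If an orbit accumulates, some point `y` of a free disc comes back to its centre `b` for the first
time; composing `f` with a push of `b` to `y` inside the disc makes `b` periodic without creating
fixed points.
-/

open Set Filter Function Metric Topology

section Logarithm

theorem exists_continuousOn_log_of_convex {E : Type*} [NormedAddCommGroup E] [NormedSpace ℝ E]
    {U : Set E} (hUo : IsOpen U) (hUc : Convex ℝ U) {φ : E → ℂ}
    (hφ : ContinuousOn φ U) (hφ0 : ∀ x ∈ U, φ x ≠ 0) :
    ∃ ψ : E → ℂ, ContinuousOn ψ U ∧ ∀ x ∈ U, Complex.exp (ψ x) = φ x := by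
  rcases U.eq_empty_or_nonempty with rfl | hUne
  · exact ⟨0, continuousOn_empty _, fun x hx => hx.elim⟩
  have := hUc.contractibleSpace hUne
  have hU : IsSimplyConnected U := SimplyConnectedSpace.ofContractible U
  refine Complex.exists_continuousOn_eqOn_exp_comp hU hUo hφ ?_
  rintro ⟨x, hx, h0⟩
  exact hφ0 x hx h0

variable {X : Type*} [TopologicalSpace X] {S : Set X}

theorem sub_eq_sub_of_exp_eq_mul_exp (hS : IsPreconnected S) {F G : X → ℂ}
    (hF : ContinuousOn F S) (hG : ContinuousOn G S) {c : ℂ}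
    (h : ∀ x ∈ S, Complex.exp (F x) = c * Complex.exp (G x)) {x y : X} (hx : x ∈ S) (hy : y ∈ S) :
    F x - G x = F y - G y := by
  have hconst : ∀ x ∈ S, Complex.exp (F x - G x) = c := fun x hx => by
    rw [Complex.exp_sub, h x hx, mul_div_cancel_right₀ _ (Complex.exp_ne_zero _)]
  exact Complex.isCoveringMap_exp.constOn_of_comp hS (hF.sub hG)
    (fun a ha b hb => Subtype.ext ((hconst a ha).trans (hconst b hb).symm)) hx hy

end Logarithm

section ChordArgument

/-- The pairs of parameters `u < w` less than `T` apart; over them the chords of a curve without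
returns of lag less than `T` do not vanish. -/
def strip (T : ℝ) : Set (ℝ × ℝ) := {p | p.1 < p.2 ∧ p.2 < p.1 + T}

theorem isOpen_strip (T : ℝ) : IsOpen (strip T) :=
  (isOpen_lt continuous_fst continuous_snd).inter
    (isOpen_lt continuous_snd (continuous_fst.add continuous_const))

theorem convex_strip (T : ℝ) : Convex ℝ (strip T) := by
  have hpreimage : Convex ℝ {p : ℝ × ℝ | p.2 - p.1 ∈ Ioo 0 T} :=
    (convex_Ioo 0 T).linear_preimage (LinearMap.snd ℝ ℝ ℝ - LinearMap.fst ℝ ℝ ℝ)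
  convert hpreimage using 1
  ext p
  simp only [strip, mem_ofPred_eq, mem_Ioo, sub_pos, sub_lt_iff_lt_add']

/-- A continuous determination `θ (u, w)` of the logarithm of the chord `Γ w - Γ u` over
`strip T`; its imaginary part is the angle of the chord. -/
structure IsChordLog (T : ℝ) (Γ : ℝ → ℂ) (θ : ℝ × ℝ → ℂ) : Prop where
  continuousOn : ContinuousOn θ (strip T)
  exp_eq : ∀ p ∈ strip T, Complex.exp (θ p) = Γ p.2 - Γ p.1

theorem exists_isChordLog_family {T : ℝ} {γ : ℝ → ℝ → ℂ} (hγ : Continuous (uncurry γ))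
    (hinj : ∀ t u, InjOn (γ t) (Ico u (u + T))) :
    ∃ Θ : ℝ × ℝ × ℝ → ℂ, ContinuousOn Θ (univ ×ˢ strip T) ∧
      ∀ t, IsChordLog T (γ t) (fun p => Θ (t, p)) := by
  let chord : ℝ × ℝ × ℝ → ℂ := fun p => γ p.1 p.2.2 - γ p.1 p.2.1
  have hchord : Continuous chord := by fun_prop
  have hchord0 : ∀ p ∈ univ ×ˢ strip T, chord p ≠ 0 := by
    rintro ⟨t, u, w⟩ ⟨-, huw, hwT⟩ h0
    exact huw.ne' (hinj t u ⟨huw.le, hwT⟩ ⟨le_rfl, huw.trans hwT⟩ (sub_eq_zero.1 h0))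
  obtain ⟨Θ, hΘ, hexp⟩ := exists_continuousOn_log_of_convex (isOpen_univ.prod (isOpen_strip T))
    (convex_univ.prod (convex_strip T)) hchord.continuousOn hchord0
  exact ⟨Θ, hΘ, fun t => ⟨hΘ.comp (by fun_prop) fun p hp => ⟨mem_univ _, hp⟩,
    fun p hp => hexp (t, p) ⟨mem_univ _, hp⟩⟩⟩

theorem IsChordLog.exp_sub_eq_neg_one {T s w : ℝ} {Γ : ℝ → ℂ} {θ : ℝ × ℝ → ℂ}
    (hθ : IsChordLog T Γ θ) (hret : Γ (s + T) = Γ s) (hw : w ∈ Ioo s (s + T)) :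
    Complex.exp (θ (w, s + T) - θ (s, w)) = -1 := by
  have hfirst : (s, w) ∈ strip T := hw
  have hsecond : (w, s + T) ∈ strip T := ⟨hw.2, add_lt_add_left hw.1 T⟩
  have hne := Complex.exp_ne_zero (θ (s, w))
  rw [hθ.exp_eq _ hfirst] at hne
  rw [Complex.exp_sub, hθ.exp_eq _ hfirst, hθ.exp_eq _ hsecond, div_eq_iff hne, hret]
  ring

theorem chordLog_family_sub_eq {T s : ℝ} {γ : ℝ → ℝ → ℂ} {Θ : ℝ × ℝ × ℝ → ℂ}
    (hΘ : ContinuousOn Θ (univ ×ˢ strip T))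
    (hlog : ∀ t, IsChordLog T (γ t) (fun p => Θ (t, p)))
    (hret : ∀ t, γ t (s + T) = γ t s) (t t' : ℝ) {w w' : ℝ}
    (hw : w ∈ Ioo s (s + T)) (hw' : w' ∈ Ioo s (s + T)) :
    Θ (t, w, s + T) - Θ (t, s, w) = Θ (t', w', s + T) - Θ (t', s, w') := by
  let W : Set (ℝ × ℝ) := univ ×ˢ Ioo s (s + T)
  have hfirst : ContinuousOn (fun p : ℝ × ℝ => Θ (p.1, s, p.2)) W :=
    hΘ.comp (by fun_prop) fun p hp => ⟨mem_univ _, hp.2⟩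
  have hsecond : ContinuousOn (fun p : ℝ × ℝ => Θ (p.1, p.2, s + T)) W :=
    hΘ.comp (by fun_prop) fun p hp => ⟨mem_univ _, hp.2.2, add_lt_add_left hp.2.1 T⟩
  refine sub_eq_sub_of_exp_eq_mul_exp (isPreconnected_univ.prod isPreconnected_Ioo) hsecond hfirst
    (c := -1) (fun p hp => ?_) (x := (t, w)) (y := (t', w')) ⟨mem_univ _, hw⟩ ⟨mem_univ _, hw'⟩
  rw [← (hlog p.1).exp_sub_eq_neg_one (hret p.1) hp.2, ← Complex.exp_add, sub_add_cancel]

theorem IsChordLog.sub_shift_eq {T : ℝ} {Γ : ℝ → ℂ} {θ θ' : ℝ × ℝ → ℂ}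
    (hθ : IsChordLog T Γ θ) (hθ' : IsChordLog T (fun u => Γ (u + 1)) θ') {u w u' w' : ℝ}
    (h : (u, w) ∈ strip T) (h' : (u', w') ∈ strip T) :
    θ' (u, w) - θ (u + 1, w + 1) = θ' (u', w') - θ (u' + 1, w' + 1) := by
  have hshift : MapsTo (fun p : ℝ × ℝ => (p.1 + 1, p.2 + 1)) (strip T) (strip T) := fun p hp => by
    simpa [strip, add_right_comm] using! hp
  refine sub_eq_sub_of_exp_eq_mul_exp (convex_strip T).isPreconnected hθ'.continuousOn
    (hθ.continuousOn.comp (by fun_prop) hshift) (c := 1) (fun p hp => ?_) h h'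
  rw [comp_apply, one_mul, hθ'.exp_eq p hp, hθ.exp_eq _ (hshift hp)]

theorem IsChordLog.eq_of_semiconj {f : ℂ → ℂ} (hf : Continuous f) (hfix : ∀ z, f z ≠ z) {T : ℝ}
    (hT : 1 < T) {Γ : ℝ → ℂ} (hΓ : Continuous Γ) (hsemi : Semiconj Γ (· + 1) f)
    {θ : ℝ × ℝ → ℂ} (hθ : IsChordLog T Γ θ) {u w : ℝ} (huw : Γ u = Γ w) :
    θ (u, u + 1) = θ (w, w + 1) := by
  obtain ⟨V, hV, hVexp⟩ := exists_continuousOn_log_of_convex isOpen_univ convex_univ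
    (φ := fun z => f z - z) (by fun_prop) (fun z _ => sub_ne_zero.2 (hfix z))
  have hmem : ∀ u : ℝ, (u, u + 1) ∈ strip T := fun u => ⟨lt_add_one u, by simpa using hT⟩
  have hconst := sub_eq_sub_of_exp_eq_mul_exp isPreconnected_univ
    (hθ.continuousOn.comp (f := fun u => (u, u + 1)) (by fun_prop) fun u _ => hmem u)
    (hV.comp hΓ.continuousOn (mapsTo_univ _ _)) (c := 1) (fun u _ => ?_) (mem_univ u) (mem_univ w)
  · simpa only [comp_apply, huw, sub_left_inj] using hconst
  · rw [comp_apply, comp_apply, one_mul, hθ.exp_eq _ (hmem u), hVexp _ (mem_univ _)]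
    exact congrArg (· - Γ u) (hsemi u)

/-- An equivariant curve `Γ` for `f` (a translation by `1` of the parameter is an application of
`f`) whose shortest return has lag `T` and is attained at `s`, with `T` longer than one step. -/
structure IsMinimalReturn {X : Type*} [TopologicalSpace X] (f : X → X) (Γ : ℝ → X) (s T : ℝ) :
    Prop where
  continuous : Continuous Γ
  semiconj : Semiconj Γ (· + 1) f
  one_lt : 1 < T
  return_eq : Γ (s + T) = Γ s
  injOn : ∀ u, InjOn Γ (Ico u (u + T))

theorem exists_fixedPoint_of_isMinimalReturn {f : ℂ ≃ₜ ℂ} (hf : OrientationPreserving f)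
    {Γ : ℝ → ℂ} {s T : ℝ} (hΓ : IsMinimalReturn f Γ s T) : ∃ z, f z = z := by
  by_contra! hfix
  obtain ⟨H, hH, hhomeo, hzero, hone⟩ := hf
  have hT := hΓ.one_lt
  have hΓc := hΓ.continuous
  obtain ⟨Θ, hΘ, hlog⟩ := exists_isChordLog_family
    (γ := fun t u => H (t, Γ u)) (by fun_prop)
    (fun t u => (hhomeo t).injective.comp_injOn (hΓ.injOn u))
  have hlog₀ : IsChordLog T Γ (fun p => Θ (0, p)) := by simpa only [hzero] using hlog 0
  have hlog₁ : IsChordLog T (fun u => Γ (u + 1)) (fun p => Θ (1, p)) := by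
    simpa only [hone, ← hΓ.semiconj.eq] using hlog 1
  have hperiod : Θ (0, s, s + 1) = Θ (0, s + T, s + T + 1) :=
    hlog₀.eq_of_semiconj f.continuous hfix hT hΓc hΓ.semiconj hΓ.return_eq.symm
  have hfirst : s + 1 ∈ Ioo s (s + T) := ⟨by linarith, by linarith⟩
  have hlast : s + T - 1 ∈ Ioo s (s + T) := ⟨by linarith, by linarith⟩
  have hisotopy : Θ (0, s + 1, s + T) - Θ (0, s, s + 1) =
      Θ (1, s + T - 1, s + T) - Θ (1, s, s + T - 1) :=
    chordLog_family_sub_eq hΘ hlog (fun t => by simp only [hΓ.return_eq]) 0 1 hfirst hlast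
  have hshift : Θ (1, s + T - 1, s + T) - Θ (0, s + T, s + T + 1) =
      Θ (1, s, s + T - 1) - Θ (0, s + 1, s + T) := by
    simpa only [sub_add_cancel] using hlog₀.sub_shift_eq hlog₁ (u := s + T - 1) (w := s + T)
      ⟨hlast.2, by linarith⟩ hlast
  have hturn : Θ (0, s + 1, s + T) - Θ (0, s, s + 1) = 0 := by
    linear_combination (1 / 2 : ℂ) * (hisotopy + hshift - hperiod)
  have hneg := hlog₀.exp_sub_eq_neg_one hΓ.return_eq hfirst
  rw [hturn, Complex.exp_zero] at hneg
  norm_num at hneg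

end ChordArgument

section FreeSets

variable {X : Type*}

/-- `D` is free for `f` when it is disjoint from its image. -/
def IsFree (f : X → X) (D : Set X) : Prop := MapsTo f D Dᶜ

theorem IsFree.mono {f : X → X} {D D' : Set X} (hD : IsFree f D) (h : D' ⊆ D) :
    IsFree f D' :=
  MapsTo.mono hD h (compl_subset_compl.2 h)

theorem IsFree.mapsTo_closure [TopologicalSpace X] {f : X → X} {D : Set X}
    (hD : IsFree f D) (hf : Continuous f) (hDo : IsOpen D) : MapsTo f (closure D) Dᶜ :=
  hDo.isClosed_compl.closure_eq ▸ MapsTo.closure hD hf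

theorem IsFree.symm {e : X ≃ X} {D : Set X} (hD : IsFree e D) : IsFree e.symm D :=
  fun z hz hz' => hD hz' (by simpa only [e.apply_symm_apply] using hz)

theorem exists_isFree_ball [MetricSpace X] {f : X → X} (hf : Continuous f) {a : X}
    (ha : f a ≠ a) : ∃ r > 0, IsFree f (ball a r) := by
  obtain ⟨A, B, hA, hB, hfa, haB, hAB⟩ := t2_separation ha
  obtain ⟨r, hr, hball⟩ := Metric.mem_nhds_iff.1
    (inter_mem (hB.mem_nhds haB) (hf.continuousAt (hA.mem_nhds hfa)))
  exact ⟨r, hr, fun z hz hz' => disjoint_left.1 hAB (hball hz).2 (hball hz').1⟩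

variable {E : Type*} [NormedAddCommGroup E] [NormedSpace ℝ E]

theorem IsFree.mem_sphere {g : E ≃ₜ E} {b y : E} {r : ℝ} (hfree : IsFree g (ball b r))
    (hr : r ≠ 0) (hy : y ∈ closedBall b r) (hgy : g y ∈ closedBall b r) :
    y ∈ sphere b r ∧ g y ∈ sphere b r := by
  rw [← closure_ball b hr] at hy hgy
  have hg_out : g y ∉ ball b r := hfree.mapsTo_closure g.continuous isOpen_ball hy
  have hy_out : y ∉ ball b r := by
    have hsymm : IsFree g.symm (ball b r) := IsFree.symm (e := g.toEquiv) hfree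
    simpa only [g.symm_apply_apply] using! hsymm.mapsTo_closure g.symm.continuous isOpen_ball hgy
  rw [← frontier_ball b hr, isOpen_ball.frontier_eq]
  exact ⟨⟨hy, hy_out⟩, ⟨hgy, hg_out⟩⟩

theorem exists_maximal_free_ball [ProperSpace E] {g : E ≃ₜ E} (hfix : ∀ z, g z ≠ z) (b : E) :
    ∃ r y, 0 < r ∧ y ∈ sphere b r ∧ g y ∈ sphere b r ∧ IsFree g (ball b r) := by
  let reach : E → ℝ := fun z => max (dist z b) (dist (g z) b)
  have hg : Continuous g := g.continuous
  obtain ⟨y, hmin⟩ := Continuous.exists_forall_le (by fun_prop : Continuous reach)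
    (tendsto_atTop_mono (fun z => le_max_left _ _) (tendsto_dist_right_cocompact_atTop b))
  have hfree : IsFree g (ball b (reach y)) := fun z hz hgz =>
    (max_lt hz hgz).not_ge (hmin z)
  have hpos : 0 < reach y := by
    refine (le_max_of_le_left dist_nonneg).lt_of_ne fun h => hfix y ?_
    have hy : dist y b ≤ 0 := h ▸ le_max_left _ _
    have hgy : dist (g y) b ≤ 0 := h ▸ le_max_right _ _
    exact (dist_le_zero.1 hgy).trans (dist_le_zero.1 hy).symm
  obtain ⟨hy, hgy⟩ := hfree.mem_sphere hpos.ne' (mem_closedBall.2 (le_max_left _ _))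
    (mem_closedBall.2 (le_max_right _ _))
  exact ⟨reach y, y, hpos, hy, hgy, hfree⟩

end FreeSets

section BrokenSegment

variable {E : Type*} [NormedAddCommGroup E] [NormedSpace ℝ E]

/-- The path from `x` to `y` over the time interval `[0, 1]` which runs straight to `b`, reached
at time `1 / 2`, and then straight to `y`. -/
def brokenSegment (x b y : E) (u : ℝ) : E :=
  b + max 0 (1 - 2 * u) • (x - b) + max 0 (2 * u - 1) • (y - b)

theorem brokenSegment_of_le_half (x b y : E) {u : ℝ} (hu : u ≤ 1 / 2) :
    brokenSegment x b y u = b + (1 - 2 * u) • (x - b) := by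
  rw [brokenSegment, max_eq_right (by linarith), max_eq_left (by linarith), zero_smul, add_zero]

theorem brokenSegment_of_half_le (x b y : E) {u : ℝ} (hu : 1 / 2 ≤ u) :
    brokenSegment x b y u = b + (2 * u - 1) • (y - b) := by
  rw [brokenSegment, max_eq_left (by linarith), max_eq_right (by linarith), zero_smul, add_zero]

theorem brokenSegment_zero (x b y : E) : brokenSegment x b y 0 = x := by
  simp [brokenSegment]

theorem brokenSegment_half (x b y : E) : brokenSegment x b y (1 / 2) = b := by
  simp [brokenSegment]

theorem brokenSegment_one (x b y : E) : brokenSegment x b y 1 = y := by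
  rw [brokenSegment_of_half_le x b y (by norm_num)]
  norm_num

theorem continuous_brokenSegment (x b y : E) : Continuous (brokenSegment x b y) := by
  unfold brokenSegment
  fun_prop

theorem dist_brokenSegment {x b y : E} {r : ℝ} (hx : x ∈ sphere b r) (hy : y ∈ sphere b r)
    (u : ℝ) : dist (brokenSegment x b y u) b = |1 - 2 * u| * r := by
  rw [mem_sphere_iff_norm] at hx hy
  rcases le_total u (1 / 2) with hu | hu
  · rw [brokenSegment_of_le_half x b y hu, dist_self_add_left, norm_smul, hx, Real.norm_eq_abs]
  · rw [brokenSegment_of_half_le x b y hu, dist_self_add_left, norm_smul, hy, Real.norm_eq_abs,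
      abs_sub_comm]

theorem brokenSegment_injective {x b y : E} {r : ℝ} (hx : x ∈ sphere b r)
    (hy : y ∈ sphere b r) (hxy : x ≠ y) : Injective (brokenSegment x b y) := by
  have hr : r ≠ 0 := by
    rintro rfl
    exact hxy ((dist_le_zero.1 hx.le).trans (dist_le_zero.1 hy.le).symm)
  refine Injective.of_lt_imp_ne fun u w huw h => ?_
  have hdist : |1 - 2 * u| = |1 - 2 * w| := by
    refine mul_right_cancel₀ hr ?_
    rw [← dist_brokenSegment hx hy, ← dist_brokenSegment hx hy, h]
  have hmirror : 2 * w - 1 = 1 - 2 * u := by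
    rcases abs_eq_abs.1 hdist with h' | h' <;> linarith
  rw [brokenSegment_of_le_half x b y (by linarith), brokenSegment_of_half_le x b y (by linarith),
    hmirror] at h
  have hscale : 1 - 2 * u ≠ 0 := by linarith
  exact hxy (sub_left_inj.1 (smul_right_injective E hscale (add_left_cancel h)))

theorem brokenSegment_mem_ball {x b y : E} {r : ℝ} (hr : 0 < r) (hx : x ∈ sphere b r)
    (hy : y ∈ sphere b r) {u : ℝ} (hu : u ∈ Ioo 0 1) : brokenSegment x b y u ∈ ball b r := by
  rw [mem_ball, dist_brokenSegment hx hy]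
  refine mul_lt_of_lt_one_left hr (abs_lt.2 ⟨?_, ?_⟩) <;> linarith [hu.1, hu.2]

end BrokenSegment

section EquivariantCurve

theorem injOn_of_lt_imp_ne {α β : Type*} [LinearOrder α] {φ : α → β} {s : Set α}
    (h : ∀ x ∈ s, ∀ y ∈ s, x < y → φ x ≠ φ y) : InjOn φ s := fun x hx y hy hxy =>
  by_contra fun hne => (lt_or_gt_of_ne hne).elim (fun hlt => h x hx y hy hlt hxy)
    fun hgt => h y hy x hx hgt hxy.symm

variable {X : Type*}

theorem exists_equivariant_extension [TopologicalSpace X] (g : X ≃ₜ X) {α : ℝ → X}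
    (hα : ContinuousOn α (Icc 0 1)) (h01 : α 1 = g (α 0)) :
    ∃ Γ : ℝ → X, Continuous Γ ∧ Semiconj Γ (· + 1) g ∧ EqOn Γ α (Icc 0 1) := by
  let Γ : ℝ → X := fun u => (g ^ ⌊u⌋) (α (Int.fract u))
  have hpiece : ∀ k : ℤ, EqOn Γ (fun u => (g ^ k) (α (u - k))) (Icc k (k + 1)) := by
    intro k u hu
    rcases hu.2.eq_or_lt with rfl | h
    · simp only [Γ, Int.floor_add_one, Int.floor_intCast, add_sub_cancel_left, h01,
        Int.fract_add_one, Int.fract_intCast, zpow_add_one, Homeomorph.mul_apply]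
    · simp only [Γ, ← Int.self_sub_floor, Int.floor_eq_iff.2 ⟨hu.1, h⟩]
  have hcover : ⋃ k : ℤ, Icc (k : ℝ) (k + 1) = univ := iUnion_Icc_intCast ℝ
  have hlocfin : LocallyFinite fun k : ℤ => Icc (k : ℝ) (k + 1) :=
    locallyFinite_Icc_of_tendsto tendsto_intCast_atTop_atTop
      (tendsto_atBot_add_const_right _ _ (tendsto_intCast_atBot_iff.2 tendsto_id))
  refine ⟨Γ, hlocfin.continuous hcover (fun _ => isClosed_Icc) fun k => ?_, fun u => ?_, ?_⟩
  · refine ((g ^ k).continuous.comp_continuousOn (hα.comp (by fun_prop) fun u hu => ?_)).congr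
      (hpiece k)
    exact ⟨sub_nonneg.2 hu.1, sub_le_iff_le_add'.2 hu.2⟩
  · simp only [Γ, Int.floor_add_one, Int.fract_add_one, add_comm _ (1 : ℤ), zpow_one_add,
      Homeomorph.mul_apply]
  · simpa only [Int.cast_zero, zero_add, sub_zero, zpow_zero] using! hpiece 0

theorem semiconj_add_intCast_eq_iff {g : X → X} (hg : Injective g) {Γ : ℝ → X}
    (hΓ : Semiconj Γ (· + 1) g) (k : ℤ) {u w : ℝ} : Γ (u + k) = Γ (w + k) ↔ Γ u = Γ w := by
  have hstep : ∀ u w, Γ (u + 1) = Γ (w + 1) ↔ Γ u = Γ w := fun u w => by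
    rw [hΓ.eq u, hΓ.eq w, hg.eq_iff]
  induction k using Int.induction_on with
  | zero => simp only [Int.cast_zero, add_zero]
  | succ i ih => simpa only [Int.cast_add, Int.cast_one, ← add_assoc, hstep] using ih
  | pred i ih =>
    rw [← hstep]
    simpa only [Int.cast_sub, Int.cast_one, add_assoc, sub_add_cancel] using ih

theorem semiconj_fract_eq {g : X → X} (hg : Injective g) {Γ : ℝ → X}
    (hΓ : Semiconj Γ (· + 1) g) {u w : ℝ} (h : Γ u = Γ w) :
    Γ (Int.fract u) = Γ (Int.fract u + (w - u)) := by
  rw [← semiconj_add_intCast_eq_iff hg hΓ ⌊u⌋, add_right_comm, Int.fract_add_floor,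
    add_sub_cancel, h]

theorem injOn_Icc_add_one_of_isFree {g : X → X} (hg : Injective g) {Γ : ℝ → X}
    (hΓ : Semiconj Γ (· + 1) g) (hinj : InjOn Γ (Icc 0 1)) {D : Set X} (hD : IsFree g D)
    (hΓD : MapsTo Γ (Ioo 0 1) D) (u : ℝ) : InjOn Γ (Icc u (u + 1)) := by
  have hlag : ∀ x ∈ Ico (0 : ℝ) 1, ∀ τ ∈ Ioc (0 : ℝ) 1, Γ x ≠ Γ (x + τ) := by
    rintro x ⟨hx₀, hx₁⟩ τ ⟨hτ₀, hτ₁⟩ h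
    rcases le_or_gt (x + τ) 1 with hle | hgt
    · linarith [hinj ⟨hx₀, hx₁.le⟩ ⟨by linarith, hle⟩ h]
    · have himage : Γ x = g (Γ (x + τ - 1)) := by rw [← hΓ.eq, sub_add_cancel, h]
      have hx : x ∈ Ioo (0 : ℝ) 1 := ⟨by linarith, hx₁⟩
      have hprev : x + τ - 1 ∈ Ioo (0 : ℝ) 1 := ⟨by linarith, by linarith⟩
      exact hD (hΓD hprev) (himage ▸ hΓD hx)
  exact injOn_of_lt_imp_ne fun x hx w hw hxw h =>
    hlag _ ⟨Int.fract_nonneg x, Int.fract_lt_one x⟩ _ ⟨sub_pos.2 hxw, by linarith [hx.1, hw.2]⟩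
      (semiconj_fract_eq hg hΓ h)

theorem exists_isMinimalReturn_of_return [TopologicalSpace X] [T2Space X] {g : X → X}
    (hg : Injective g) {Γ : ℝ → X} (hΓc : Continuous Γ) (hΓ : Semiconj Γ (· + 1) g)
    (hinj : ∀ u, InjOn Γ (Icc u (u + 1))) {u₀ w₀ : ℝ} (huw : u₀ < w₀) (h₀ : Γ u₀ = Γ w₀) :
    ∃ s T, IsMinimalReturn g Γ s T := by
  have hlag : ∀ {u w}, u < w → Γ u = Γ w → 1 < w - u := fun {u w} hlt h => by
    by_contra! hle
    exact hlt.ne (hinj u (left_mem_Icc.2 (by linarith)) ⟨hlt.le, by linarith⟩ h)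
  let returns : Set (ℝ × ℝ) := (Icc 0 1 ×ˢ Icc 1 (w₀ - u₀)) ∩ {p | Γ p.1 = Γ (p.1 + p.2)}
  have hcompact : IsCompact returns := (isCompact_Icc.prod isCompact_Icc).inter_right
    (isClosed_eq (by fun_prop) (by fun_prop))
  have hmem : ∀ {u w}, u < w → Γ u = Γ w → w - u ≤ w₀ - u₀ → (Int.fract u, w - u) ∈ returns :=
    fun {u w} hlt h hle => ⟨⟨⟨Int.fract_nonneg u, (Int.fract_lt_one u).le⟩, (hlag hlt h).le, hle⟩,
      semiconj_fract_eq hg hΓ h⟩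
  obtain ⟨⟨s, T⟩, ⟨⟨-, hT₁, hT₀⟩, hret⟩, hmin⟩ :=
    hcompact.exists_isMinOn ⟨_, hmem huw h₀ le_rfl⟩ continuous_snd.continuousOn
  change 1 ≤ T at hT₁
  change T ≤ w₀ - u₀ at hT₀
  refine ⟨s, T, hΓc, hΓ, ?_, hret.symm, fun u => injOn_of_lt_imp_ne fun x hx w hw hxw h => ?_⟩
  · simpa using! hlag (lt_add_of_pos_right s (by linarith)) hret
  · have hshort : w - x < T := by linarith [hx.1, hw.2]
    exact absurd (hmin (hmem hxw h (by linarith))) hshort.not_ge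

theorem exists_isMinimalReturn {E : Type*} [NormedAddCommGroup E] [NormedSpace ℝ E]
    [ProperSpace E] {g : E ≃ₜ E} (hfix : ∀ z, g z ≠ z) {b : E} (hb : b ∈ periodicPts g) :
    ∃ Γ s T, IsMinimalReturn g Γ s T := by
  obtain ⟨n, hn, hb⟩ := hb
  obtain ⟨r, y, hr, hy, hgy, hfree⟩ := exists_maximal_free_ball hfix b
  obtain ⟨Γ, hΓc, hΓ, hΓα⟩ := exists_equivariant_extension g (α := brokenSegment y b (g y))
    (continuous_brokenSegment _ _ _).continuousOn
    (by rw [brokenSegment_one, brokenSegment_zero])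
  have hinj : InjOn Γ (Icc 0 1) :=
    (hΓα.injOn_iff).2 (brokenSegment_injective hy hgy (hfix y).symm).injOn
  have hball : MapsTo Γ (Ioo 0 1) (ball b r) := fun u hu =>
    hΓα (Ioo_subset_Icc_self hu) ▸ brokenSegment_mem_ball hr hy hgy hu
  have hhalf : Γ (1 / 2) = b :=
    (hΓα ⟨by norm_num, by norm_num⟩).trans (brokenSegment_half _ _ _)
  have hreturn : Γ (1 / 2) = Γ (1 / 2 + n) := by
    have hiter := (hΓ.iterate_right n).eq (1 / 2)
    rw [add_right_iterate, nsmul_one, hhalf, hb.eq] at hiter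
    rw [hhalf, hiter]
  have hlag : (1 / 2 : ℝ) < 1 / 2 + n := lt_add_of_pos_right _ (Nat.cast_pos.2 hn)
  exact ⟨Γ, exists_isMinimalReturn_of_return g.injective hΓc hΓ
    (injOn_Icc_add_one_of_isFree g.injective hΓ hinj hfree hball) hlag hreturn⟩

theorem exists_fixedPoint_of_mem_periodicPts {f : ℂ ≃ₜ ℂ} (hf : OrientationPreserving f) {b : ℂ}
    (hb : b ∈ periodicPts f) : ∃ z, f z = z := by
  by_contra! hfix
  obtain ⟨Γ, s, T, hΓ⟩ := exists_isMinimalReturn hfix hb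
  exact (exists_fixedPoint_of_isMinimalReturn hf hΓ).elim hfix

end EquivariantCurve

section Push

variable {E : Type*} [NormedAddCommGroup E] [NormedSpace ℝ E]

theorem isHomeomorph_add_of_lipschitzWith [CompleteSpace E] {φ : E → E} {k : NNReal}
    (hφ : LipschitzWith k φ) (hk : k < 1) : IsHomeomorph fun z => z + φ z := by
  have happrox : ApproximatesLinearOn (fun z => z + φ z)
      (ContinuousLinearEquiv.refl ℝ E : E →L[ℝ] E) univ k := by
    rw [ApproximatesLinearOn.approximatesLinearOn_iff_lipschitzOnWith, lipschitzOnWith_univ]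
    convert hφ using 1
    ext z
    simp
  refine (happrox.toHomeomorph _ ?_).isHomeomorph
  rcases subsingleton_or_nontrivial E with hE | hE
  · exact .inl hE
  · exact .inr (by simpa using hk)

/-- The displacement of the points `z` of the ball of radius `r` about `b` by the multiple
`r - dist z b` of `v`; for `‖v‖ < 1` it is a homeomorphism taking `b` to `b + r • v`. -/
def push (b v : E) (r : ℝ) (z : E) : E := z + max 0 (r - dist z b) • v

theorem isHomeomorph_push [CompleteSpace E] (b : E) {v : E} (hv : ‖v‖ < 1) (r : ℝ) :
    IsHomeomorph (push b v r) := by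
  have hlip : LipschitzWith 1 fun z => max 0 (r - dist z b) := by
    simpa using! ((LipschitzWith.const r).sub (LipschitzWith.dist_left b)).const_max 0
  refine isHomeomorph_add_of_lipschitzWith (k := ‖v‖₊) (.of_dist_le_mul fun z w => ?_) hv
  rw [dist_eq_norm, ← sub_smul, norm_smul, mul_comm, ← dist_eq_norm]
  exact mul_le_mul_of_nonneg_left (by simpa using hlip.dist_le_mul z w) (norm_nonneg v)

theorem push_center (b v : E) {r : ℝ} (hr : 0 ≤ r) : push b v r b = b + r • v := by
  rw [push, dist_self, sub_zero, max_eq_right hr]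

theorem push_of_notMem_ball {b v z : E} {r : ℝ} (hz : z ∉ ball b r) : push b v r z = z := by
  rw [push, max_eq_left (sub_nonpos.2 (not_lt.1 hz)), zero_smul, add_zero]

theorem orientationPreserving_of_eq_push {h : ℂ ≃ₜ ℂ} {b v : ℂ} {r : ℝ} (hv : ‖v‖ < 1)
    (hpush : ∀ z, h z = push b v r z) : OrientationPreserving h := by
  have hclamp : ∀ t : ℝ, ‖max 0 (min t 1) • v‖ < 1 := fun t => by
    rw [norm_smul, Real.norm_of_nonneg (le_max_left _ _)]
    exact (mul_le_of_le_one_left (norm_nonneg v)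
      (max_le zero_le_one (min_le_right _ _))).trans_lt hv
  refine ⟨fun p => push b (max 0 (min p.1 1) • v) r p.2, ?_,
    fun t => isHomeomorph_push b (hclamp t) r, fun z => ?_, fun z => ?_⟩
  · unfold push
    fun_prop
  · simp [push]
  · simp [hpush]

theorem exists_orientationPreserving_eqOn_compl_ball {b y : ℂ} {r : ℝ} (hy : y ∈ ball b r) :
    ∃ h : ℂ ≃ₜ ℂ, OrientationPreserving h ∧ h b = y ∧ EqOn h id (ball b r)ᶜ := by
  have hr : 0 < r := pos_of_mem_ball hy
  have hv : ‖r⁻¹ • (y - b)‖ < 1 := by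
    rw [norm_smul, norm_inv, Real.norm_of_nonneg hr.le, inv_mul_lt_one₀ hr]
    exact mem_ball_iff_norm.1 hy
  refine ⟨(isHomeomorph_push b hv r).homeomorph, orientationPreserving_of_eq_push hv fun _ => rfl,
    ?_, fun z hz => push_of_notMem_ball hz⟩
  change push b _ r b = y
  rw [push_center b _ hr.le, smul_inv_smul₀ hr.ne', add_sub_cancel]

end Push

section Recurrence

variable {X : Type*}

theorem OrientationPreserving.trans {f g : ℂ ≃ₜ ℂ} (hf : OrientationPreserving f)
    (hg : OrientationPreserving g) : OrientationPreserving (f.trans g) := by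
  obtain ⟨F, hF, hFhomeo, hF₀, hF₁⟩ := hf
  obtain ⟨G, hG, hGhomeo, hG₀, hG₁⟩ := hg
  exact ⟨fun p => G (p.1, F p), by fun_prop, fun t => (hGhomeo t).comp (hFhomeo t),
    fun z => by simp only [hF₀, hG₀],
    fun z => by simp only [hF₁, hG₁, Homeomorph.trans_apply]⟩

theorem IsFree.apply_eq_of_comp_apply_eq {f h : X → X} {D : Set X} (hD : IsFree f D)
    (hinj : Injective h) (hid : EqOn h id Dᶜ) {z : X} (hz : f (h z) = z) : f z = z := by
  have hmaps : MapsTo h D D := fun x hx => by_contra fun hhx => hhx ((hinj (hid hhx)).symm ▸ hx)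
  by_cases hzD : z ∈ D
  · exact absurd (hz.symm ▸ hzD) (hD (hmaps hzD))
  · rwa [hid hzD] at hz

theorem iterate_comp_eq_of_eqOn_compl {f h : X → X} {D : Set X} {b y : X}
    (hb : h b = y) (hid : EqOn h id Dᶜ) {n : ℕ} (hn : 1 ≤ n)
    (hout : ∀ i, 0 < i → i < n → f^[i] y ∉ D) : (f ∘ h)^[n] b = f^[n] y := by
  induction n, hn using Nat.le_induction with
  | base => rw [iterate_one, iterate_one, comp_apply, hb]
  | succ n hn ih =>
    rw [iterate_succ_apply', ih fun i hi hin => hout i hi (hin.trans n.lt_succ_self), comp_apply,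
      hid (hout n hn n.lt_succ_self), id, ← iterate_succ_apply' f]

theorem exists_fixedPoint_of_first_return {f : ℂ ≃ₜ ℂ} (hf : OrientationPreserving f) {b y : ℂ}
    {r : ℝ} (hfree : IsFree f (ball b r)) (hy : y ∈ ball b r) {n : ℕ} (hn : 0 < n)
    (hyb : f^[n] y = b) (hout : ∀ i, 0 < i → i < n → f^[i] y ∉ ball b r) : ∃ z, f z = z := by
  obtain ⟨h, hh, hb, hid⟩ := exists_orientationPreserving_eqOn_compl_ball hy
  have hper : b ∈ periodicPts (h.trans f) :=
    ⟨n, hn, (iterate_comp_eq_of_eqOn_compl hb hid hn hout).trans hyb⟩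
  obtain ⟨z, hz⟩ := exists_fixedPoint_of_mem_periodicPts (hh.trans hf) hper
  exact ⟨z, hfree.apply_eq_of_comp_apply_eq h.injective hid hz⟩

theorem exists_fixedPoint_of_return {f : ℂ ≃ₜ ℂ} (hf : OrientationPreserving f) {b y : ℂ}
    {r : ℝ} (hfree : IsFree f (ball b r)) (hy : y ∈ ball b r) {n : ℕ} (hn : 0 < n)
    (hyb : f^[n] y = b) : ∃ z, f z = z := by
  induction n using Nat.strong_induction_on generalizing y with
  | h n ih =>
    by_cases hearly : ∃ i, 0 < i ∧ i < n ∧ f^[i] y ∈ ball b r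
    · obtain ⟨i, hi, hin, hmem⟩ := hearly
      refine ih (n - i) (Nat.sub_lt hn hi) hmem (Nat.sub_pos_of_lt hin) ?_
      rw [← iterate_add_apply, Nat.sub_add_cancel hin.le, hyb]
    · push Not at hearly
      exact exists_fixedPoint_of_first_return hf hfree hy hn hyb hearly

theorem exists_fixedPoint_of_nonwandering {f : ℂ ≃ₜ ℂ} (hf : OrientationPreserving f) {a : ℂ}
    (ha : ∀ U ∈ 𝓝 a, ∃ y ∈ U, ∃ n > 0, f^[n] y ∈ U) : ∃ z, f z = z := by
  by_cases hfix : f a = a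
  · exact ⟨a, hfix⟩
  obtain ⟨r, hr, hfree⟩ := exists_isFree_ball f.continuous hfix
  obtain ⟨y, hy, n, hn, hyn⟩ := ha _ (ball_mem_nhds a (by positivity : 0 < r / 3))
  have hsub : ball (f^[n] y) (2 * r / 3) ⊆ ball a r :=
    ball_subset_ball' (by linarith [mem_ball.1 hyn])
  have hclose : y ∈ ball (f^[n] y) (2 * r / 3) := by
    rw [mem_ball]
    linarith [dist_triangle_right y (f^[n] y) a, mem_ball.1 hy, mem_ball.1 hyn]
  exact exists_fixedPoint_of_return hf (hfree.mono hsub) hclose hn rfl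

theorem exists_pos_iterate_mem_of_mapClusterPt [TopologicalSpace X] {f : X → X}
    {x a : X} (ha : MapClusterPt a atTop fun n => f^[n] x) {U : Set X} (hU : U ∈ 𝓝 a) :
    ∃ y ∈ U, ∃ n > 0, f^[n] y ∈ U := by
  have hfreq := mapClusterPt_iff_frequently.1 ha U hU
  obtain ⟨i, hi⟩ := hfreq.exists
  obtain ⟨j, hij, hj⟩ := frequently_atTop'.1 hfreq i
  refine ⟨f^[i] x, hi, j - i, Nat.sub_pos_of_lt hij, ?_⟩
  rwa [← iterate_add_apply, Nat.sub_add_cancel hij.le]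

end Recurrence

theorem fixed_point_of_invariant_compact_general {f : ℂ ≃ₜ ℂ} (hf : OrientationPreserving f)
    {K : Set ℂ} (hK : IsCompact K) {x : ℂ} (hx : ∃ᶠ n in atTop, f^[n] x ∈ K) :
    ∃ z, f z = z := by
  obtain ⟨a, -, ha⟩ := hK.exists_mapClusterPt_of_frequently hx
  exact exists_fixedPoint_of_nonwandering hf fun _ => exists_pos_iterate_mem_of_mapClusterPt ha

/-- An orientation-preserving homeomorphism of the plane with a nonempty
compact invariant set has a fixed point. -/
theorem fixed_point_of_invariant_compact (f : ℂ ≃ₜ ℂ)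
    (hor : OrientationPreserving f) (K : Set ℂ) (hKne : K.Nonempty)
    (hKc : IsCompact K) (hKinv : f '' K = K) :
    ∃ z : ℂ, f z = z := by
  obtain ⟨x, hx⟩ := hKne
  exact fixed_point_of_invariant_compact_general hor hKc
    (.of_forall fun n => (mapsTo_iff_image_subset.2 hKinv.subset).iterate n hx)
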